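/- arXiv:1010.5144 — 2 statements merged into one kernel-verified Lean document; each statement's English description precedes it below -/
import Mathlib

section
/- Let G be a connected graph of order n₁ ≥ 2 and let H be a graph of order n₂ ≥ 2. Then pd(G⊙H) ≤ (1/n₁)·dim(G⊙H) + pd(G) + 1. -/
/-!
A minimum resolving set `S` of `G ⊙ H` meets some copy of `H`, say the `i`-th, in at most
`dim(G ⊙ H) / n₁` vertices; let `B ⊆ W` be this trace. A vertex outside the `i`-th copy is
equidistant from all vertices of that copy, so `B` alone separates the vertices of the `i`-th
copy by the distances `0`, `1`, `2` inside it. These do not depend on the copy, so `B` works in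
every copy.

Take a minimum resolving partition `P` of `G` and partition `G ⊙ H` into the cells of `P`, the
sets `V × {b}` for `b ∈ B`, and the remainder `V × (W \ B)`: at most `pd(G) + |B| + 1` cells. The
distances to the cells of `P` determine the vertex of `G`, or the copy of `H`, in question
(`setDist_inl_image`, `setDist_inr_image`). The distance from a vertex of the `i`-th copy to
`V × {b}` is attained inside the `i`-th copy (`setDist_layer`), so these distances determine the
vertex within its copy. All distances in the corona come from an explicit formula
(`dist_corona`).
-/

open SimpleGraph

/-- The corona product `G ⊙ H`: one copy of `G`, one copy of `H` for each vertex of `G`,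
with the `i`-th vertex of `G` joined to every vertex of the `i`-th copy of `H`. -/
def corona {α β : Type*} (G : SimpleGraph α) (H : SimpleGraph β) :
    SimpleGraph (α ⊕ α × β) :=
  SimpleGraph.fromRel (fun x y =>
    match x, y with
    | Sum.inl a, Sum.inl b => G.Adj a b
    | Sum.inl a, Sum.inr iu => a = iu.1
    | Sum.inr iu, Sum.inr jw => iu.1 = jw.1 ∧ H.Adj iu.2 jw.2
    | _, _ => False)

/-- The distance from a vertex to a set of vertices: `d(v,A) = min_{u ∈ A} d(v,u)`. -/
noncomputable def setDist {α : Type*} (G : SimpleGraph α) (v : α) (A : Set α) : ℕ :=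
  sInf (G.dist v '' A)

/-- `S` is a resolving set for `G`: distinct vertices have distinct metric representations. -/
def IsResolvingSet {α : Type*} (G : SimpleGraph α) (S : Set α) : Prop :=
  ∀ u v : α, (∀ w ∈ S, G.dist u w = G.dist v w) → u = v

/-- The metric dimension of `G`: minimum cardinality of a resolving set. -/
noncomputable def metricDim {α : Type*} (G : SimpleGraph α) : ℕ :=
  sInf {k | ∃ S : Set α, IsResolvingSet G S ∧ S.ncard = k}

/-- A family of sets is a resolving partition for `G` if it is a partition of the vertex set
into nonempty cells and distinct vertices have distinct partition representations. -/
def IsResolvingPartition {α : Type*} (G : SimpleGraph α) (P : Set (Set α)) : Prop :=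
  (∀ A ∈ P, A.Nonempty) ∧ (∀ v : α, ∃! A : Set α, A ∈ P ∧ v ∈ A) ∧
    ∀ u v : α, (∀ A ∈ P, setDist G u A = setDist G v A) → u = v

/-- The partition dimension of `G`: minimum number of cells in a resolving partition. -/
noncomputable def partitionDim {α : Type*} (G : SimpleGraph α) : ℕ :=
  sInf {t | ∃ P : Set (Set α), IsResolvingPartition G P ∧ P.ncard = t}

/-- `c(H)`: the maximum cardinality of a connected component of `H` which is isomorphic to a
complete graph (i.e. whose vertex set is a clique). -/
noncomputable def maxCompleteComp {β : Type*} (H : SimpleGraph β) : ℕ :=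
  sSup {k | ∃ C : H.ConnectedComponent, H.IsClique C.supp ∧ C.supp.ncard = k}

/-- `β(H)`: the number of isolated vertices of `H`. -/
noncomputable def numIsolated {β : Type*} (H : SimpleGraph β) : ℕ :=
  Set.ncard {v : β | ∀ u, ¬ H.Adj v u}

/-- `α(H)`: the number of connected components of `H` of order greater than one. -/
noncomputable def numBigComp {β : Type*} (H : SimpleGraph β) : ℕ :=
  Set.ncard {C : H.ConnectedComponent | 1 < C.supp.ncard}

/-! ### Distances in the corona -/

/-- The distance, in the cone over `H`, between two vertices of `H`: `0`, `1` or `2`. -/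
noncomputable def coneDist {W : Type*} (H : SimpleGraph W) (u w : W) : ℕ :=
  open Classical in if u = w then 0 else if H.Adj u w then 1 else 2

/-- The explicit formula for distances in the corona `G ⊙ H`; see `dist_corona`. -/
noncomputable def coronaDist {V W : Type*} (G : SimpleGraph V) (H : SimpleGraph W) :
    V ⊕ V × W → V ⊕ V × W → ℕ
  | Sum.inl a, Sum.inl b => G.dist a b
  | Sum.inl a, Sum.inr y => G.dist a y.1 + 1
  | Sum.inr x, Sum.inl b => G.dist x.1 b + 1
  | Sum.inr x, Sum.inr y =>
    open Classical in if x.1 = y.1 then coneDist H x.2 y.2 else G.dist x.1 y.1 + 2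

lemma coneDist_le_two {W : Type*} (H : SimpleGraph W) (u w : W) : coneDist H u w ≤ 2 := by
  unfold coneDist; split_ifs <;> omega

section
variable {V W : Type*} {G : SimpleGraph V} {H : SimpleGraph W}

lemma corona_adj_inl_inl {a b : V} :
    (corona G H).Adj (Sum.inl a) (Sum.inl b) ↔ G.Adj a b := by
  simp only [corona, SimpleGraph.fromRel_adj]
  constructor
  · rintro ⟨-, h | h⟩
    exacts [h, h.symm]
  · intro h
    exact ⟨fun e => h.ne (Sum.inl.inj e), Or.inl h⟩

lemma corona_adj_inl_inr {a i : V} {w : W} :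
    (corona G H).Adj (Sum.inl a) (Sum.inr (i, w)) ↔ a = i := by
  simp [corona, SimpleGraph.fromRel_adj]

lemma corona_adj_inr_inl {a i : V} {w : W} :
    (corona G H).Adj (Sum.inr (i, w)) (Sum.inl a) ↔ a = i := by
  rw [SimpleGraph.adj_comm, corona_adj_inl_inr]

lemma corona_adj_inr_inr {i j : V} {u w : W} :
    (corona G H).Adj (Sum.inr (i, u)) (Sum.inr (j, w)) ↔ i = j ∧ H.Adj u w := by
  simp only [corona, SimpleGraph.fromRel_adj]
  constructor
  · rintro ⟨-, h | h⟩
    exacts [h, ⟨h.1.symm, h.2.symm⟩]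
  · intro h
    refine ⟨fun e => h.2.ne ?_, Or.inl h⟩
    simpa using (Prod.ext_iff.1 (Sum.inr.inj e)).2

/-- The explicit formula changes by at most one along an edge, and hence bounds the distance from
below. -/
lemma coronaDist_le_succ (hG : G.Connected) {x y : V ⊕ V × W} (h : (corona G H).Adj x y)
    (z : V ⊕ V × W) : coronaDist G H x z ≤ coronaDist G H y z + 1 := by
  rcases x with a | ⟨i, u⟩ <;> rcases y with b | ⟨j, w⟩
  · rw [corona_adj_inl_inl] at h
    have h1 := SimpleGraph.dist_eq_one_iff_adj.2 h
    rcases z with c | ⟨k, t⟩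
    · have := hG.dist_triangle (u := a) (v := b) (w := c)
      simp only [coronaDist]; omega
    · have := hG.dist_triangle (u := a) (v := b) (w := k)
      simp only [coronaDist]; omega
  · rw [corona_adj_inl_inr] at h
    subst h
    rcases z with c | ⟨k, t⟩
    · simp only [coronaDist]; omega
    · simp only [coronaDist]
      split_ifs with e
      · subst e; simp
      · omega
  · rw [corona_adj_inr_inl] at h
    subst h
    rcases z with c | ⟨k, t⟩
    · simp only [coronaDist]; omega
    · simp only [coronaDist]
      split_ifs with e
      · have := coneDist_le_two H u t
        omega
      · omega
  · rw [corona_adj_inr_inr] at h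
    obtain ⟨rfl, h⟩ := h
    rcases z with c | ⟨k, t⟩
    · simp only [coronaDist]; omega
    · simp only [coronaDist]
      split_ifs with e
      · unfold coneDist
        split_ifs <;> first | omega | (subst_vars; contradiction)
      · omega

lemma coronaDist_self (x : V ⊕ V × W) : coronaDist G H x x = 0 := by
  rcases x with a | ⟨i, u⟩ <;> simp [coronaDist, coneDist]

lemma coronaDist_le_length (hG : G.Connected) {x y : V ⊕ V × W} (p : (corona G H).Walk x y) :
    coronaDist G H x y ≤ p.length := by
  induction p with
  | nil => simp [coronaDist_self]
  | cons h p ih =>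
    have := coronaDist_le_succ hG h
    rw [SimpleGraph.Walk.length_cons]
    exact (this _).trans (by omega)

/-- A walk in the corona of the length given by the explicit formula. -/
lemma exists_corona_walk (hG : G.Connected) (x y : V ⊕ V × W) :
    ∃ p : (corona G H).Walk x y, p.length ≤ coronaDist G H x y := by
  let φ : G →g corona G H := ⟨Sum.inl, fun h => corona_adj_inl_inl.2 h⟩
  have key : ∀ a b : V, ∃ p : (corona G H).Walk (Sum.inl a) (Sum.inl b),
      p.length = G.dist a b := by
    intro a b
    obtain ⟨p, hp⟩ := hG.exists_walk_length_eq_dist a b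
    exact ⟨p.map φ, by rw [SimpleGraph.Walk.length_map, hp]⟩
  have up : ∀ (i : V) (u : W), (corona G H).Adj (Sum.inl i) (Sum.inr (i, u)) :=
    fun i u => corona_adj_inl_inr.2 rfl
  rcases x with a | ⟨i, u⟩ <;> rcases y with b | ⟨j, w⟩
  · obtain ⟨p, hp⟩ := key a b
    exact ⟨p, hp.le⟩
  · obtain ⟨p, hp⟩ := key a j
    exact ⟨p.concat (up j w), by simp [coronaDist, hp]⟩
  · obtain ⟨p, hp⟩ := key i b
    exact ⟨.cons (up i u).symm p, by simp [coronaDist, hp]⟩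
  · by_cases hij : i = j
    · subst hij
      by_cases huw : u = w
      · subst huw
        exact ⟨.nil, by simp⟩
      · by_cases hadj : H.Adj u w
        · exact ⟨.cons (corona_adj_inr_inr.2 ⟨rfl, hadj⟩) .nil,
            by simp [coronaDist, coneDist, huw, hadj]⟩
        · exact ⟨.cons (up i u).symm (.cons (up i w) .nil),
            by simp [coronaDist, coneDist, huw, hadj]⟩
    · obtain ⟨p, hp⟩ := key i j
      exact ⟨.cons (up i u).symm (p.concat (up j w)), by simp [coronaDist, hp, hij]⟩

lemma corona_connected (hG : G.Connected) : (corona G H).Connected := by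
  have : Nonempty V := hG.nonempty
  exact ⟨fun x y => ⟨(exists_corona_walk hG x y).choose⟩⟩

lemma dist_corona (hG : G.Connected) (x y : V ⊕ V × W) :
    (corona G H).dist x y = coronaDist G H x y := by
  apply le_antisymm
  · obtain ⟨p, hp⟩ := exists_corona_walk (H := H) hG x y
    exact (SimpleGraph.dist_le p).trans hp
  · obtain ⟨p, hp⟩ := (corona_connected (H := H) hG).exists_walk_length_eq_dist x y
    exact hp ▸ coronaDist_le_length hG p

/-! ### Distances to sets -/

lemma setDist_inl_image (hG : G.Connected) (a : V) (A : Set V) :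
    setDist (corona G H) (Sum.inl a) (Sum.inl '' A) = setDist G a A := by
  unfold setDist
  rw [Set.image_image]
  simp only [dist_corona hG, coronaDist]

lemma setDist_inr_image (hG : G.Connected) (i : V) (u : W) {A : Set V} (hA : A.Nonempty) :
    setDist (corona G H) (Sum.inr (i, u)) (Sum.inl '' A) = setDist G i A + 1 := by
  unfold setDist
  rw [Set.image_image]
  simp only [dist_corona hG, coronaDist]
  apply le_antisymm
  · obtain ⟨b, hb, h⟩ := Nat.sInf_mem (hA.image (G.dist i))
    exact Nat.sInf_le ⟨b, hb, by simp only; rw [h]⟩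
  · obtain ⟨b, hb, h⟩ := Nat.sInf_mem (hA.image (fun x => G.dist i x + 1))
    rw [← h]
    exact Nat.succ_le_succ (Nat.sInf_le ⟨b, hb, rfl⟩)

/-- The distance from a vertex of the `i`-th copy of `H` to `V × {b}` is attained in that copy. -/
lemma setDist_layer (hG : G.Connected) (i : V) (u b : W) :
    setDist (corona G H) (Sum.inr (i, u)) (Set.range fun j => Sum.inr (j, b)) =
      coneDist H u b := by
  unfold setDist
  apply le_antisymm
  · exact Nat.sInf_le ⟨Sum.inr (i, b), ⟨i, rfl⟩, by simp [dist_corona hG, coronaDist]⟩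
  · have hne : (Set.range fun j : V => (Sum.inr (j, b) : V ⊕ V × W)).Nonempty := ⟨_, i, rfl⟩
    obtain ⟨_, ⟨j, rfl⟩, h⟩ := Nat.sInf_mem (hne.image ((corona G H).dist (Sum.inr (i, u))))
    rw [← h]
    simp only [dist_corona hG, coronaDist]
    split_ifs
    · exact le_rfl
    · have := coneDist_le_two H u b
      omega

end

/-! ### Resolving sets and partitions -/

lemma setDist_eq_zero_of_mem {α : Type*} {G : SimpleGraph α} {v : α} {A : Set α} (h : v ∈ A) :
    setDist G v A = 0 :=
  Nat.le_zero.1 (Nat.sInf_le ⟨v, h, SimpleGraph.dist_self⟩)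

lemma mem_of_setDist_eq_zero {α : Type*} {G : SimpleGraph α} (hG : G.Connected) {v : α}
    {A : Set α} (hA : A.Nonempty) (h : setDist G v A = 0) : v ∈ A := by
  obtain ⟨w, hw, e⟩ := Nat.sInf_mem (hA.image (G.dist v))
  have : G.dist v w = 0 := e.trans h
  rwa [hG.dist_eq_zero_iff.1 this]

/-- A colouring whose colour classes separate the vertices of a common colour yields a resolving
partition; unused colours are harmless. -/
lemma partitionDim_le_card {α ι : Type*} [Fintype ι] {G : SimpleGraph α} (hG : G.Connected)
    (f : α → ι)
    (hf : ∀ u v, f u = f v →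
      (∀ c, setDist G u (f ⁻¹' {c}) = setDist G v (f ⁻¹' {c})) → u = v) :
    partitionDim G ≤ Fintype.card ι := by
  let P : Set (Set α) := (fun c => f ⁻¹' {c}) '' Set.range f
  have hP : IsResolvingPartition G P := by
    refine ⟨?_, ?_, ?_⟩
    · rintro _ ⟨_, ⟨a, rfl⟩, rfl⟩
      exact ⟨a, rfl⟩
    · intro v
      refine ⟨f ⁻¹' {f v}, ⟨⟨_, ⟨v, rfl⟩, rfl⟩, rfl⟩, ?_⟩
      rintro _ ⟨⟨c, -, rfl⟩, hv⟩
      have hc : f v = c := hv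
      simp only [hc]
    · intro u v h
      have h1 := h (f ⁻¹' {f u}) ⟨_, ⟨u, rfl⟩, rfl⟩
      rw [setDist_eq_zero_of_mem (show u ∈ f ⁻¹' {f u} from rfl)] at h1
      have h2 : f v = f u := mem_of_setDist_eq_zero (A := f ⁻¹' {f u}) hG ⟨u, rfl⟩ h1.symm
      refine hf u v h2.symm fun c => ?_
      by_cases hc : c ∈ Set.range f
      · exact h _ ⟨c, hc, rfl⟩
      · have : f ⁻¹' {c} = ∅ := by
          ext x
          simpa using fun e => hc ⟨x, e⟩
        simp [this, setDist]
  calc partitionDim G ≤ P.ncard := Nat.sInf_le ⟨P, hP, rfl⟩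
    _ ≤ (Set.range f).ncard := Set.ncard_image_le (Set.toFinite _)
    _ ≤ Fintype.card ι := by
      rw [← Nat.card_eq_fintype_card, ← Set.ncard_univ]
      exact Set.ncard_le_ncard (Set.subset_univ _) (Set.toFinite _)

lemma exists_resolvingSet_ncard {α : Type*} {G : SimpleGraph α} (hG : G.Connected) :
    ∃ S : Set α, IsResolvingSet G S ∧ S.ncard = metricDim G := by
  refine Nat.sInf_mem (s := {k | ∃ S : Set α, IsResolvingSet G S ∧ S.ncard = k})
    ⟨_, Set.univ, fun u v h => ?_, rfl⟩
  exact hG.dist_eq_zero_iff.1 ((h v trivial).trans SimpleGraph.dist_self)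

lemma exists_resolvingPartition_ncard {α : Type*} {G : SimpleGraph α} (hG : G.Connected) :
    ∃ P : Set (Set α), IsResolvingPartition G P ∧ P.ncard = partitionDim G := by
  refine Nat.sInf_mem (s := {t | ∃ P : Set (Set α), IsResolvingPartition G P ∧ P.ncard = t})
    ⟨_, Set.range fun v : α => ({v} : Set α), ⟨?_, ?_, ?_⟩, rfl⟩
  · rintro _ ⟨v, rfl⟩
    exact ⟨v, rfl⟩
  · intro v
    refine ⟨{v}, ⟨⟨v, rfl⟩, rfl⟩, ?_⟩
    rintro _ ⟨⟨w, rfl⟩, hw⟩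
    rw [Set.mem_singleton_iff.1 hw]
  · intro u v h
    have := h {v} ⟨v, rfl⟩
    rw [setDist_eq_zero_of_mem (Set.mem_singleton v)] at this
    exact Set.mem_singleton_iff.1 (mem_of_setDist_eq_zero hG (Set.singleton_nonempty v) this)

/-- By averaging over the copies of `H`, some copy meets a minimum resolving set in at most
`dim(G ⊙ H) / |V|` vertices, and this trace separates the vertices of `H` by `coneDist`. -/
lemma exists_small_trace {V W : Type*} [Fintype V] [Fintype W] {G : SimpleGraph V}
    {H : SimpleGraph W} (hG : G.Connected) :
    ∃ B : Set W, Fintype.card V * B.ncard ≤ metricDim (corona G H) ∧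
      ∀ u w, (∀ b ∈ B, coneDist H u b = coneDist H w b) → u = w := by
  classical
  obtain ⟨S, hS, hcard⟩ := exists_resolvingSet_ncard (corona_connected (H := H) hG)
  let B : V → Finset W := fun i => Finset.univ.filter fun w => Sum.inr (i, w) ∈ S
  have hsum : ∑ i, (B i).card ≤ metricDim (corona G H) := by
    rw [← hcard, ← Finset.card_sigma, ← Set.ncard_coe_finset]
    refine Set.ncard_le_ncard_of_injOn (fun x : (Σ _ : V, W) => Sum.inr (x.1, x.2)) ?_ ?_
      (Set.toFinite _)
    · rintro ⟨i, w⟩ h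
      simpa [B] using h
    · rintro ⟨i, w⟩ - ⟨j, t⟩ - h
      simpa using h
  have : Nonempty V := hG.nonempty
  obtain ⟨i, -, hi⟩ := Finset.exists_min_image Finset.univ (fun i => (B i).card)
    Finset.univ_nonempty
  refine ⟨B i, ?_, fun u w h => ?_⟩
  · rw [Set.ncard_coe_finset]
    refine le_trans ?_ hsum
    simpa using Finset.card_nsmul_le_sum Finset.univ (fun i => (B i).card) (B i).card hi
  · have : (Sum.inr (i, u) : V ⊕ V × W) = Sum.inr (i, w) := by
      refine hS _ _ ?_
      rintro (a | ⟨j, t⟩) hz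
      · simp [dist_corona hG, coronaDist]
      · simp only [dist_corona hG, coronaDist]
        split_ifs with e
        · subst e
          exact h t (by simpa [B] using hz)
        · rfl
    simpa using this

/-- For a connected graph `G` of order `n₁ ≥ 2` and a graph `H` of order `n₂ ≥ 2`,
`pd(G⊙H) ≤ (1/n₁)·dim(G⊙H) + pd(G) + 1`. -/
theorem stmt0 {V W : Type*} [Fintype V] [Fintype W] (G : SimpleGraph V) (H : SimpleGraph W)
    (n₁ n₂ : ℕ) (hn₁ : Fintype.card V = n₁) (hn₂ : Fintype.card W = n₂)
    (h₁ : 2 ≤ n₁) (h₂ : 2 ≤ n₂) (hG : G.Connected) :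
    (partitionDim (corona G H) : ℝ) ≤
      (1 / (n₁ : ℝ)) * metricDim (corona G H) + partitionDim G + 1 := by
  classical
  obtain ⟨B, hB, hres⟩ := exists_small_trace (H := H) hG
  obtain ⟨P, ⟨hne, hpart, hPres⟩, hP⟩ := exists_resolvingPartition_ncard hG
  choose cell hcell huniq using hpart
  -- Colours: the cells of `P`, one colour for each layer `V × {b}`, and `none` for the remainder.
  let f : V ⊕ V × W → P ⊕ Option B
    | Sum.inl a => Sum.inl ⟨cell a, (hcell a).1⟩
    | Sum.inr x => Sum.inr (if h : x.2 ∈ B then some ⟨x.2, h⟩ else none)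
  have hfA : ∀ A : P, f ⁻¹' {Sum.inl A} = Sum.inl '' (A : Set V) := by
    rintro ⟨A, hA⟩
    ext (a | ⟨i, w⟩)
    · simp only [Set.mem_preimage, Set.mem_singleton_iff, f, Sum.inl.injEq, Subtype.mk.injEq,
        Set.mem_image, exists_eq_right]
      exact ⟨fun e => e ▸ (hcell a).2, fun h => (huniq a A ⟨hA, h⟩).symm⟩
    · simp [f]
  have hfb : ∀ b : B, f ⁻¹' {Sum.inr (some b)} = Set.range fun j => Sum.inr (j, (b : W)) := by
    rintro ⟨b, hb⟩
    ext (a | ⟨i, w⟩)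
    · simp [f]
    · simp only [Set.mem_preimage, Set.mem_singleton_iff, f, Sum.inr.injEq, Set.mem_range,
        Prod.mk.injEq, exists_eq_left]
      constructor
      · intro h
        split_ifs at h
        simpa using h.symm
      · rintro rfl
        simp [hb]
  have hle := partitionDim_le_card (corona_connected (H := H) hG) f (by
    rintro (a | ⟨i, u⟩) (b | ⟨j, w⟩) hc hd
    · rw [hPres a b fun A hA => ?_]
      have := hd (Sum.inl ⟨A, hA⟩)
      rwa [hfA, setDist_inl_image hG, setDist_inl_image hG] at this
    · simp [f] at hc
    · simp [f] at hc
    · have hij : i = j := hPres i j fun A hA => by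
        have := hd (Sum.inl ⟨A, hA⟩)
        rw [hfA, setDist_inr_image hG _ _ (hne A hA), setDist_inr_image hG _ _ (hne A hA)] at this
        omega
      rw [hij, hres u w fun b hb => ?_]
      have := hd (Sum.inr (some ⟨b, hb⟩))
      rwa [hfb, setDist_layer hG, setDist_layer hG] at this)
  have hcardι : Fintype.card (P ⊕ Option B) = partitionDim G + (B.ncard + 1) := by
    rw [Fintype.card_sum, Fintype.card_option, ← hP, ← Nat.card_coe_set_eq, ← Nat.card_coe_set_eq,
      Nat.card_eq_fintype_card, Nat.card_eq_fintype_card]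
  rw [hcardι] at hle
  have hpos : (0 : ℝ) < n₁ := by exact_mod_cast (by omega : 0 < n₁)
  have hB' : (B.ncard : ℝ) ≤ (1 / (n₁ : ℝ)) * metricDim (corona G H) := by
    rw [one_div, inv_mul_eq_div, le_div_iff₀ hpos, mul_comm]
    rw [hn₁] at hB
    exact_mod_cast hB
  have hle' : (partitionDim (corona G H) : ℝ) ≤ partitionDim G + (B.ncard + 1) := by
    exact_mod_cast hle
  linarith
end

section
/- Let G be a connected graph. If Π is a resolving partition for G⊙K_n of cardinality n+1, then for every vertex v of G⊙K_n and every set A ∈ Π, the distance d(v,A) is at most 3. -/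
/-!
Write `C = G ⊙ K_n`. Two vertices of the same copy of `K_n` are adjacent twins, so a resolving
partition puts them into different cells (`copy_cell_injective`). With `n + 1` cells, a copy that
misses a cell `A` therefore meets every other cell (`copy_meets_cell`).

Suppose `d(i, A) ≥ 3` for a vertex `i` of `G`, and let `j` be the neighbour of `i` on a geodesic
towards `A`. Since `d(j, A) ≥ 2`, the copies at `i` and at `j` both miss `A`, hence meet all other
cells. Let `B` be the cell of `i` and `x` the vertex of the copy at `j` lying in `B`. Both `i` and
`x` have distance `0` to `B`, distance `1` to every cell other than `A` and `B`, and
`d(x, A) = d(j, A) + 1 = d(i, A)`; this contradicts resolvability. So `d(i, A) ≤ 2` for all `i`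
(`setDist_inl_le_two`), and each vertex of the copy at `i` is adjacent to `i`.
-/

open SimpleGraph

section setDist

variable {α : Type*} {G : SimpleGraph α}

lemma setDist_le_dist {v a : α} {A : Set α} (ha : a ∈ A) : setDist G v A ≤ G.dist v a :=
  Nat.sInf_le ⟨a, ha, rfl⟩

lemma exists_setDist_eq {A : Set α} (hA : A.Nonempty) (v : α) :
    ∃ a ∈ A, setDist G v A = G.dist v a := by
  obtain ⟨a, ha, h⟩ := Nat.sInf_mem (hA.image (G.dist v))
  exact ⟨a, ha, h.symm⟩

lemma setDist_eq_zero {v : α} {A : Set α} (hv : v ∈ A) : setDist G v A = 0 := by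
  have h := setDist_le_dist (G := G) (v := v) hv
  simpa using h

lemma setDist_le_succ (hG : G.Connected) {v w : α} {A : Set α} (hA : A.Nonempty)
    (h : G.Adj v w) : setDist G v A ≤ setDist G w A + 1 := by
  obtain ⟨a, ha, e⟩ := exists_setDist_eq (G := G) hA w
  have h1 := setDist_le_dist (G := G) (v := v) ha
  have h2 := hG.dist_triangle (u := v) (v := w) (w := a)
  have h3 := dist_eq_one_iff_adj.2 h
  omega

lemma setDist_eq_one (hG : G.Connected) {v a : α} {A : Set α} (hv : v ∉ A) (ha : a ∈ A)
    (h : G.Adj v a) : setDist G v A = 1 := by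
  have h1 := setDist_le_dist (G := G) (v := v) ha
  rw [dist_eq_one_iff_adj.2 h] at h1
  obtain ⟨b, hb, e⟩ := exists_setDist_eq (G := G) ⟨a, ha⟩ v
  have h2 : 0 < G.dist v b := hG.pos_dist_of_ne (fun hvb => hv (hvb ▸ hb))
  omega

/-- A vertex at positive distance from `A` has a neighbour one step closer to `A`. -/
lemma exists_adj_setDist_succ (hG : G.Connected) {v : α} {A : Set α} (hA : A.Nonempty)
    (hv : setDist G v A ≠ 0) : ∃ w, G.Adj v w ∧ setDist G v A = setDist G w A + 1 := by
  obtain ⟨a, ha, e⟩ := exists_setDist_eq (G := G) hA v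
  obtain ⟨p, hp⟩ := hG.exists_walk_length_eq_dist v a
  cases p with
  | nil => exact absurd (e.trans dist_self) hv
  | @cons _ w _ h q =>
    refine ⟨w, h, le_antisymm (setDist_le_succ hG hA h) ?_⟩
    have h1 := setDist_le_dist (G := G) (v := w) ha
    have h2 := dist_le q
    simp only [Walk.length_cons] at hp
    omega

end setDist

section corona

variable {V : Type*} {G : SimpleGraph V} {n : ℕ}

local notation "C" => corona G (⊤ : SimpleGraph (Fin n))

lemma corona_adj_inl_inr_s8 (i : V) (u : Fin n) : (C).Adj (Sum.inl i) (Sum.inr (i, u)) := by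
  simp [corona]

lemma corona_adj_inr_inr_s8 (i : V) {u w : Fin n} (h : u ≠ w) :
    (C).Adj (Sum.inr (i, u)) (Sum.inr (i, w)) := by
  simp [corona, h]

lemma corona_adj_inl_inl_s8 {i j : V} (h : G.Adj i j) :
    (C).Adj (Sum.inl i) (Sum.inl j) := by
  simp [corona, h, h.ne]

lemma eq_of_corona_adj_inl_inr {i j : V} {u : Fin n}
    (h : (C).Adj (Sum.inl i) (Sum.inr (j, u))) : i = j := by
  simpa [corona] using h

lemma eq_of_corona_adj_inr_inr {i j : V} {u w : Fin n}
    (h : (C).Adj (Sum.inr (i, u)) (Sum.inr (j, w))) : i = j := by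
  simp only [corona, fromRel_adj] at h
  rcases h.2 with h | h
  · exact h.1
  · exact h.1.symm

lemma corona_connected_s8 (hG : G.Connected) : (C).Connected := by
  obtain ⟨r⟩ := hG.nonempty
  let f : G →g C := ⟨Sum.inl, fun h => corona_adj_inl_inl_s8 h⟩
  have key : ∀ x, (C).Reachable (Sum.inl r) x := by
    rintro (i | ⟨i, u⟩)
    · exact (hG.preconnected r i).map f
    · exact ((hG.preconnected r i).map f).trans (corona_adj_inl_inr_s8 i u).reachable
  exact (connected_iff_exists_forall_reachable _).2 ⟨_, key⟩

/-- A walk leaving the copy at `i` passes through `i`. -/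
lemma dist_inl_lt_length (i : V) {x y : V ⊕ V × Fin n} (p : (C).Walk x y) :
    (∃ u, x = Sum.inr (i, u)) → (∀ w, y ≠ Sum.inr (i, w)) →
      (C).dist (Sum.inl i) y + 1 ≤ p.length := by
  induction p with
  | nil =>
    rintro ⟨u, rfl⟩ hy
    exact absurd rfl (hy u)
  | @cons x z y h q ih =>
    rintro ⟨u, rfl⟩ hy
    rw [Walk.length_cons]
    rcases z with j | ⟨j, w⟩
    · obtain rfl := eq_of_corona_adj_inl_inr h.symm
      have := dist_le q
      omega
    · obtain rfl := eq_of_corona_adj_inr_inr h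
      have := ih ⟨w, rfl⟩ hy
      omega

/-- If the copy at `i` misses `A`, each of its vertices is one step further from `A` than `i`. -/
lemma setDist_inr (hG : G.Connected) {A : Set (V ⊕ V × Fin n)} (hA : A.Nonempty) {i : V}
    (hi : ∀ u, Sum.inr (i, u) ∉ A) (u : Fin n) :
    setDist C (Sum.inr (i, u)) A = setDist C (Sum.inl i) A + 1 := by
  have hC := corona_connected_s8 (n := n) hG
  refine le_antisymm (setDist_le_succ hC hA (corona_adj_inl_inr_s8 i u).symm) ?_
  obtain ⟨a, ha, e⟩ := exists_setDist_eq (G := C) hA (Sum.inr (i, u))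
  obtain ⟨p, hp⟩ := hC.exists_walk_length_eq_dist (Sum.inr (i, u)) a
  have h1 := dist_inl_lt_length i p ⟨u, rfl⟩ (fun w hw => hi w (hw ▸ ha))
  have h2 := setDist_le_dist (G := C) (v := Sum.inl i) ha
  omega

variable {Part : Set (Set (V ⊕ V × Fin n))}

lemma IsResolvingPartition.cell_unique {α : Type*} {H : SimpleGraph α} {P : Set (Set α)}
    (hP : IsResolvingPartition H P) {v : α} {A B : Set α} (hA : A ∈ P) (hB : B ∈ P)
    (hvA : v ∈ A) (hvB : v ∈ B) : A = B :=
  (hP.2.1 v).unique ⟨hA, hvA⟩ ⟨hB, hvB⟩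

/-- Vertices of one copy of `K_n` are twins, so they lie in different cells. -/
lemma copy_cell_injective (hG : G.Connected) (hPart : IsResolvingPartition C Part) {i : V}
    {u w : Fin n} {B : Set (V ⊕ V × Fin n)} (hB : B ∈ Part) (hu : Sum.inr (i, u) ∈ B)
    (hw : Sum.inr (i, w) ∈ B) : u = w := by
  have hC := corona_connected_s8 (n := n) hG
  suffices h : (Sum.inr (i, u) : V ⊕ V × Fin n) = Sum.inr (i, w) by simpa using h
  refine hPart.2.2 _ _ fun D hD => ?_
  by_cases hDB : D = B
  · subst hDB
    rw [setDist_eq_zero hu, setDist_eq_zero hw]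
  have huD : Sum.inr (i, u) ∉ D := fun h => hDB (hPart.cell_unique hD hB h hu)
  have hwD : Sum.inr (i, w) ∉ D := fun h => hDB (hPart.cell_unique hD hB h hw)
  by_cases hm : ∃ t, Sum.inr (i, t) ∈ D
  · obtain ⟨t, ht⟩ := hm
    rw [setDist_eq_one hC huD ht (corona_adj_inr_inr_s8 i (fun h => huD (h ▸ ht))),
      setDist_eq_one hC hwD ht (corona_adj_inr_inr_s8 i (fun h => hwD (h ▸ ht)))]
  · push Not at hm
    rw [setDist_inr hG (hPart.1 D hD) hm, setDist_inr hG (hPart.1 D hD) hm]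

/-- Pigeonhole: the `n` vertices of a copy lie in `n` different cells, so with `n + 1` cells in
total a copy missing `A` meets every other cell. -/
lemma copy_meets_cell (hG : G.Connected) (hPart : IsResolvingPartition C Part)
    (hcard : Part.ncard = n + 1) {A : Set (V ⊕ V × Fin n)} (hA : A ∈ Part) {i : V}
    (hi : ∀ u, Sum.inr (i, u) ∉ A) {B : Set (V ⊕ V × Fin n)} (hB : B ∈ Part) (hBA : B ≠ A) :
    ∃ u, Sum.inr (i, u) ∈ B := by
  choose c hc using fun u : Fin n => (hPart.2.1 (Sum.inr (i, u))).exists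
  have hinj : Function.Injective c := fun u w h =>
    copy_cell_injective hG hPart (hc u).1 (hc u).2 (h ▸ (hc w).2)
  have hfin : Part.Finite := Set.finite_of_ncard_ne_zero (by omega)
  have hsub : Set.range c ⊆ Part \ {A} := by
    rintro _ ⟨u, rfl⟩
    exact ⟨(hc u).1, fun h => hi u (h ▸ (hc u).2)⟩
  have hn : (Set.range c).ncard = n := by
    rw [← Set.image_univ, Set.ncard_image_of_injective _ hinj, Set.ncard_univ, Nat.card_fin]
  have heq : Set.range c = Part \ {A} := by
    refine Set.eq_of_subset_of_ncard_le hsub ?_ hfin.sdiff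
    rw [Set.ncard_sdiff_singleton_of_mem hA, hn, hcard]
    omega
  obtain ⟨u, rfl⟩ : B ∈ Set.range c := heq ▸ ⟨hB, hBA⟩
  exact ⟨u, (hc u).2⟩

lemma setDist_inl_le_two (hG : G.Connected) (hPart : IsResolvingPartition C Part)
    (hcard : Part.ncard = n + 1) {A : Set (V ⊕ V × Fin n)} (hA : A ∈ Part) (i : V) :
    setDist C (Sum.inl i) A ≤ 2 := by
  by_contra! h3
  have hC := corona_connected_s8 (n := n) hG
  have hne := hPart.1 A hA
  -- a copy whose root is at distance at least `2` from `A` misses `A`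
  have hmiss : ∀ j : V, 2 ≤ setDist C (Sum.inl j) A → ∀ u, Sum.inr (j, u) ∉ A := by
    intro j hj u hu
    have := setDist_le_succ hC hne (corona_adj_inl_inr_s8 j u)
    rw [setDist_eq_zero hu] at this
    omega
  have hi := hmiss i (by omega)
  obtain ⟨y, hy, hdy⟩ := exists_adj_setDist_succ hC hne (v := Sum.inl i) (A := A) (by omega)
  rcases y with j | ⟨j, u⟩
  · have hj := hmiss j (by omega)
    obtain ⟨B, ⟨hB, hiB⟩, -⟩ := hPart.2.1 (Sum.inl i)
    have hBA : B ≠ A := by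
      rintro rfl
      rw [setDist_eq_zero hiB] at h3
      omega
    obtain ⟨x, hx⟩ := copy_meets_cell hG hPart hcard hA hj hB hBA
    suffices h : (Sum.inl i : V ⊕ V × Fin n) = Sum.inr (j, x) by cases h
    refine hPart.2.2 _ _ fun D hD => ?_
    by_cases hDA : D = A
    · rw [hDA, setDist_inr hG hne hj, hdy]
    by_cases hDB : D = B
    · rw [hDB, setDist_eq_zero hiB, setDist_eq_zero hx]
    have hiD : Sum.inl i ∉ D := fun h => hDB (hPart.cell_unique hD hB h hiB)
    have hxD : Sum.inr (j, x) ∉ D := fun h => hDB (hPart.cell_unique hD hB h hx)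
    obtain ⟨s, hs⟩ := copy_meets_cell hG hPart hcard hA hi hD hDA
    obtain ⟨t, ht⟩ := copy_meets_cell hG hPart hcard hA hj hD hDA
    rw [setDist_eq_one hC hiD hs (corona_adj_inl_inr_s8 i s),
      setDist_eq_one hC hxD ht (corona_adj_inr_inr_s8 j (fun h => hxD (h ▸ ht)))]
  -- the step towards `A` cannot lead into the copy at `i`, which is further away from `A`
  · obtain rfl := eq_of_corona_adj_inl_inr hy
    rw [setDist_inr hG hne hi] at hdy
    omega

end corona

/-- Let `G` be a connected graph. If `Part` is a resolving partition for `G⊙K_n`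
of cardinality `n+1`, then for every vertex `v` of `G⊙K_n` and every `A ∈ Part`,
`d(v,A) ≤ 3`. -/
theorem stmt8 {V : Type*} [Fintype V] (G : SimpleGraph V) (hG : G.Connected) (n : ℕ)
    (Part : Set (Set (V ⊕ V × Fin n)))
    (hPart : IsResolvingPartition (corona G (⊤ : SimpleGraph (Fin n))) Part)
    (hcard : Part.ncard = n + 1) :
    ∀ v : V ⊕ V × Fin n, ∀ A ∈ Part, setDist (corona G (⊤ : SimpleGraph (Fin n))) v A ≤ 3 := by
  rintro (i | ⟨i, u⟩) A hA
  · exact (setDist_inl_le_two hG hPart hcard hA i).trans (by norm_num)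
  · have h1 := setDist_inl_le_two hG hPart hcard hA i
    have h2 := setDist_le_succ (corona_connected_s8 hG) (hPart.1 A hA) (corona_adj_inl_inr_s8 i u).symm
    omega
end
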